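/- arXiv:1512.01907 — 4 statements merged into one kernel-verified Lean document; each statement's English description precedes it below -/
import Mathlib

section
/- (Lemma 2.2, second moment) Assume P([0,1]) = 1. Then the second moment of a random variable X with distribution P satisfies E(X²) = p₂(r₂ − 1)²(−p₁r₁ + p₂r₂ + 1) / ((p₁r₁ + p₂r₂ − 1)(p₁r₁² + p₂r₂² − 1)). -/
/-!
Integrating `x` and `x ^ 2` against both sides of the self-similarity relation gives a triangular
linear system for the first two moments, with diagonal entries `1 - ∑ pᵢ rᵢ` and `1 - ∑ pᵢ rᵢ ^ 2`.
The second is positive when the maps contract in mean square, and then so is the first, because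
`2 * r ≤ 1 + r ^ 2`.
-/

open MeasureTheory

section Mixture

variable {ι α β E : Type*} [Fintype ι] [MeasurableSpace α] [MeasurableSpace β]
  [NormedAddCommGroup E] [NormedSpace ℝ E]

theorem integral_sum_ofReal_smul_map {μ : Measure α} {p : ι → ℝ} {S : ι → α → β} {f : β → E}
    (hp : ∀ i, 0 ≤ p i) (hS : ∀ i, AEMeasurable (S i) μ)
    (hf : Integrable f (∑ i, ENNReal.ofReal (p i) • μ.map (S i))) :
    ∫ y, f y ∂(∑ i, ENNReal.ofReal (p i) • μ.map (S i)) = ∑ i, p i • ∫ x, f (S i x) ∂μ := by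
  rw [integrable_finsetSum_measure] at hf
  rw [integral_finsetSum_measure hf]
  refine Finset.sum_congr rfl fun i hi => ?_
  rw [integral_smul_measure, ENNReal.toReal_ofReal (hp i)]
  obtain hpi | hpi := (hp i).eq_or_lt
  · simp [← hpi]
  · have hf_map : Integrable f (μ.map (S i)) :=
      (integrable_smul_measure (ENNReal.ofReal_pos.2 hpi).ne' ENNReal.ofReal_ne_top).1 (hf i hi)
    rw [integral_map (hS i) hf_map.aestronglyMeasurable]

end Mixture

section AffineMoments

variable {Ω : Type*} [MeasurableSpace Ω] {μ : Measure Ω} [IsProbabilityMeasure μ] {X : Ω → ℝ}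

theorem integral_mul_add_const (hX : Integrable X μ) (a b : ℝ) :
    ∫ ω, (a * X ω + b) ∂μ = a * ∫ ω, X ω ∂μ + b := by
  rw [integral_add (hX.const_mul a) (integrable_const b), integral_const_mul, integral_const,
    probReal_univ, one_smul]

theorem integral_mul_add_const_sq (hX : MemLp X 2 μ) (a b : ℝ) :
    ∫ ω, (a * X ω + b) ^ 2 ∂μ =
      a ^ 2 * ∫ ω, X ω ^ 2 ∂μ + 2 * a * b * ∫ ω, X ω ∂μ + b ^ 2 := by
  have integrable_linear : Integrable (fun ω => 2 * a * b * X ω + b ^ 2) μ :=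
    ((hX.integrable one_le_two).const_mul _).add (integrable_const _)
  calc ∫ ω, (a * X ω + b) ^ 2 ∂μ
      = ∫ ω, (a ^ 2 * X ω ^ 2 + (2 * a * b * X ω + b ^ 2)) ∂μ := by congr with ω; ring
    _ = a ^ 2 * ∫ ω, X ω ^ 2 ∂μ + (2 * a * b * ∫ ω, X ω ∂μ + b ^ 2) := by
      rw [integral_add (hX.integrable_sq.const_mul _) integrable_linear, integral_const_mul,
        integral_mul_add_const (hX.integrable one_le_two)]
    _ = a ^ 2 * ∫ ω, X ω ^ 2 ∂μ + 2 * a * b * ∫ ω, X ω ∂μ + b ^ 2 := by ring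

end AffineMoments

section SelfSimilar

variable {ι : Type*} [Fintype ι] {p a b : ι → ℝ} {P : Measure ℝ} [IsProbabilityMeasure P]

theorem integral_id_of_affine_selfSimilar (hp : ∀ i, 0 ≤ p i)
    (hself : P = ∑ i, ENNReal.ofReal (p i) • P.map (fun x => a i * x + b i))
    (hP : Integrable (fun x => x) P) :
    ∫ x, x ∂P = ∑ i, p i * (a i * ∫ x, x ∂P + b i) := by
  calc ∫ x, x ∂P
      = ∫ x, x ∂(∑ i, ENNReal.ofReal (p i) • P.map (fun x => a i * x + b i)) := by
        rw [← hself]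
    _ = ∑ i, p i * ∫ x, (a i * x + b i) ∂P :=
        integral_sum_ofReal_smul_map hp (fun i => by fun_prop) (by rwa [← hself])
    _ = ∑ i, p i * (a i * ∫ x, x ∂P + b i) := by simp only [integral_mul_add_const hP]

theorem integral_sq_of_affine_selfSimilar (hp : ∀ i, 0 ≤ p i)
    (hself : P = ∑ i, ENNReal.ofReal (p i) • P.map (fun x => a i * x + b i))
    (hP : MemLp (fun x => x) 2 P) :
    ∫ x, x ^ 2 ∂P =
      ∑ i, p i * (a i ^ 2 * ∫ x, x ^ 2 ∂P + 2 * a i * b i * ∫ x, x ∂P + b i ^ 2) := by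
  calc ∫ x, x ^ 2 ∂P
      = ∫ x, x ^ 2 ∂(∑ i, ENNReal.ofReal (p i) • P.map (fun x => a i * x + b i)) := by
        rw [← hself]
    _ = ∑ i, p i * ∫ x, (a i * x + b i) ^ 2 ∂P :=
        integral_sum_ofReal_smul_map hp (fun i => by fun_prop)
          (by rw [← hself]; exact hP.integrable_sq)
    _ = _ := by simp only [integral_mul_add_const_sq hP]

end SelfSimilar

theorem stmt_3_general {r₁ r₂ p₁ p₂ : ℝ} (hp₁ : 0 ≤ p₁) (hp₂ : 0 ≤ p₂) (hp : p₁ + p₂ = 1)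
    (hr : p₁ * r₁ ^ 2 + p₂ * r₂ ^ 2 < 1) {P : Measure ℝ} [IsProbabilityMeasure P]
    (hself : P = ENNReal.ofReal p₁ • P.map (fun x => r₁ * x) +
      ENNReal.ofReal p₂ • P.map (fun x => r₂ * x + (1 - r₂)))
    (hP : MemLp (fun x => x) 2 P) :
    ∫ x, x ^ 2 ∂P =
      p₂ * (r₂ - 1) ^ 2 * (-(p₁ * r₁) + p₂ * r₂ + 1) /
        ((p₁ * r₁ + p₂ * r₂ - 1) * (p₁ * r₁ ^ 2 + p₂ * r₂ ^ 2 - 1)) := by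
  have weights_nonneg : ∀ i, 0 ≤ ![p₁, p₂] i := by simp [Fin.forall_fin_two, hp₁, hp₂]
  have self_similar : P = ∑ i, ENNReal.ofReal (![p₁, p₂] i) •
      P.map (fun x => ![r₁, r₂] i * x + ![0, 1 - r₂] i) := by
    simpa [Fin.sum_univ_two] using hself
  have mean_eq := integral_id_of_affine_selfSimilar weights_nonneg self_similar
    (hP.integrable one_le_two)
  have second_moment_eq := integral_sq_of_affine_selfSimilar weights_nonneg self_similar hP
  simp only [Fin.sum_univ_two, Matrix.cons_val_zero, Matrix.cons_val_one]
    at mean_eq second_moment_eq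
  have mean_ratio_lt_one : p₁ * r₁ + p₂ * r₂ < 1 := by
    linarith [mul_nonneg hp₁ (sq_nonneg (r₁ - 1)), mul_nonneg hp₂ (sq_nonneg (r₂ - 1))]
  rw [eq_div_iff (mul_ne_zero (sub_neg.2 mean_ratio_lt_one).ne (sub_neg.2 hr).ne)]
  -- Eliminate the mean between the two moment equations.
  linear_combination (1 - (p₁ * r₁ + p₂ * r₂)) * second_moment_eq +
    2 * p₂ * r₂ * (1 - r₂) * mean_eq

theorem stmt_3 (r₁ r₂ p₁ p₂ : ℝ) (hr₁ : 0 < r₁) (hr₂ : 0 < r₂) (hr : r₁ + r₂ < 1)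
    (hp₁ : 0 < p₁) (hp₂ : 0 < p₂) (hp : p₁ + p₂ = 1)
    (S₁ S₂ : ℝ → ℝ)
    (hS₁ : S₁ = fun x => r₁ * x)
    (hS₂ : S₂ = fun x => r₂ * x + (1 - r₂))
    (P : Measure ℝ) [IsProbabilityMeasure P]
    (hP : P = ENNReal.ofReal p₁ • P.map S₁ + ENNReal.ofReal p₂ • P.map S₂)
    (hsupp : P (Set.Icc (0 : ℝ) 1) = 1) :
    ∫ x, x ^ 2 ∂P =
      p₂ * (r₂ - 1) ^ 2 * (-(p₁ * r₁) + p₂ * r₂ + 1) /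
        ((p₁ * r₁ + p₂ * r₂ - 1) * (p₁ * r₁ ^ 2 + p₂ * r₂ ^ 2 - 1)) := by
  subst hS₁ hS₂
  have sq_lt_one₁ : r₁ ^ 2 < 1 := pow_lt_one₀ hr₁.le (by linarith) two_ne_zero
  have sq_lt_one₂ : r₂ ^ 2 < 1 := pow_lt_one₀ hr₂.le (by linarith) two_ne_zero
  have mem_Icc_ae : ∀ᵐ x ∂P, x ∈ Set.Icc (0 : ℝ) 1 :=
    (mem_ae_iff_prob_eq_one measurableSet_Icc).2 hsupp
  exact stmt_3_general hp₁.le hp₂.le hp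
    (convex_Iio (1 : ℝ) sq_lt_one₁ sq_lt_one₂ hp₁.le hp₂.le hp) hP
    (memLp_of_bounded mem_Icc_ae aestronglyMeasurable_id 2)
end

section
/- (Lemma 2.2, variance) Assume P([0,1]) = 1. Then the variance V = ∫ (x − E(X))² dP(x) of a random variable X with distribution P satisfies V = −p₂(r₂ − 1)²((p₁r₁ − 1)² + p₂(p₁r₁² − 1)) / ((p₁r₁ + p₂r₂ − 1)²(p₁r₁² + p₂r₂² − 1)). -/
open MeasureTheory

/-!
Under a self-similar measure with affine maps `x ↦ aᵢ x + bᵢ` and weights `pᵢ`, integrating `x`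
gives a linear equation for the mean `m`. Integrating `(x - m)²` and splitting each summand into
variance plus squared bias gives `V = ∑ pᵢ (aᵢ² V + (aᵢ m + bᵢ - m)²)` for the variance. For the
maps `r₁ x` and `r₂ x + (1 - r₂)` the biases are multiples of `m` and `1 - m`, and the solution
factors: `V = p₁ p₂ (1 - r₁)² (1 - r₂)² / ((1 - p₁ r₁ - p₂ r₂)² (1 - p₁ r₁² - p₂ r₂²))`.
-/

open ProbabilityTheory

/-- `P` is self-similar (an invariant measure of the iterated function system `S`) with weights `p`.
Weights are real to match the moment formulas; a negative weight counts as `0`. -/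
def IsSelfSimilarMeasure {ι α : Type*} [Fintype ι] [MeasurableSpace α]
    (p : ι → ℝ) (S : ι → α → α) (P : Measure α) : Prop :=
  P = ∑ i, ENNReal.ofReal (p i) • P.map (S i)

lemma integral_affine {P : Measure ℝ} [IsProbabilityMeasure P]
    (hP : Integrable (fun x ↦ x) P) (a b : ℝ) :
    ∫ x, (a * x + b) ∂P = a * ∫ x, x ∂P + b := by
  rw [integral_add (hP.const_mul a) (integrable_const b), integral_const_mul, integral_const,
    probReal_univ, one_smul]

lemma integral_affine_sub_sq {P : Measure ℝ} [IsProbabilityMeasure P]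
    (hP : MemLp (fun x ↦ x) 2 P) (a b c : ℝ) :
    ∫ x, (a * x + b - c) ^ 2 ∂P =
      a ^ 2 * Var[fun x ↦ x; P] + (a * ∫ x, x ∂P + b - c) ^ 2 := by
  have memLp_affine : MemLp (fun x ↦ a * x + (b - c)) 2 P := (hP.const_mul a).add (memLp_const _)
  have variance_affine : Var[fun x ↦ a * x + (b - c); P] = a ^ 2 * Var[fun x ↦ x; P] := by
    rw [variance_add_const (hP.const_mul a).aestronglyMeasurable, variance_const_mul]
  have variance_eq := variance_eq_sub memLp_affine
  rw [variance_affine, integral_affine (hP.integrable one_le_two)] at variance_eq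
  simp only [Pi.pow_apply] at variance_eq
  simp only [add_sub_assoc]
  linarith

namespace IsSelfSimilarMeasure

variable {ι : Type*} [Fintype ι] {p : ι → ℝ}

lemma integral_eq {α E : Type*} [MeasurableSpace α] [NormedAddCommGroup E] [NormedSpace ℝ E]
    {S : ι → α → α} {P : Measure α} (h : IsSelfSimilarMeasure p S P) (hp : ∀ i, 0 ≤ p i)
    (hS : ∀ i, AEMeasurable (S i) P) {f : α → E} (hf : Integrable f P) :
    ∫ x, f x ∂P = ∑ i, p i • ∫ x, f (S i x) ∂P := by
  have integrable_piece : ∀ i, Integrable f (ENNReal.ofReal (p i) • P.map (S i)) := by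
    rw [h, integrable_finsetSum_measure] at hf
    exact fun i ↦ hf i (Finset.mem_univ i)
  conv_lhs => rw [h]
  rw [integral_finsetSum_measure fun i _ ↦ integrable_piece i]
  refine Finset.sum_congr rfl fun i _ ↦ ?_
  rw [integral_smul_measure, ENNReal.toReal_ofReal (hp i)]
  obtain hpi | hpi := (hp i).eq_or_lt
  · simp only [← hpi, zero_smul]
  · have integrable_map : Integrable f (P.map (S i)) :=
      (integrable_smul_measure (ENNReal.ofReal_pos.2 hpi).ne' ENNReal.ofReal_ne_top).1
        (integrable_piece i)
    rw [integral_map (hS i) integrable_map.aestronglyMeasurable]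

variable {a b : ι → ℝ} {P : Measure ℝ} [IsProbabilityMeasure P]

lemma mean_affine (h : IsSelfSimilarMeasure p (fun i x ↦ a i * x + b i) P) (hp : ∀ i, 0 ≤ p i)
    (hP : Integrable (fun x ↦ x) P) :
    ∫ x, x ∂P = ∑ i, p i * (a i * ∫ x, x ∂P + b i) := by
  simpa only [integral_affine hP, smul_eq_mul] using h.integral_eq hp (by fun_prop) hP

lemma variance_affine (h : IsSelfSimilarMeasure p (fun i x ↦ a i * x + b i) P)
    (hp : ∀ i, 0 ≤ p i) (hP : MemLp (fun x ↦ x) 2 P) :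
    Var[fun x ↦ x; P] =
      ∑ i, p i * (a i ^ 2 * Var[fun x ↦ x; P] + (a i * ∫ x, x ∂P + b i - ∫ x, x ∂P) ^ 2) := by
  have integrable_sq : Integrable (fun x ↦ (x - ∫ y, y ∂P) ^ 2) P :=
    (hP.sub (memLp_const _)).integrable_sq
  have := h.integral_eq hp (by fun_prop) integrable_sq
  simpa only [← variance_eq_integral aemeasurable_id', integral_affine_sub_sq hP, smul_eq_mul]
    using this

end IsSelfSimilarMeasure

section TwoMaps

variable {r₁ r₂ p₁ p₂ : ℝ}

lemma weighted_sum_lt_one_of_weighted_sum_sq_lt_one (hp₁ : 0 ≤ p₁) (hp₂ : 0 ≤ p₂)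
    (hp : p₁ + p₂ = 1) (hr : p₁ * r₁ ^ 2 + p₂ * r₂ ^ 2 < 1) : p₁ * r₁ + p₂ * r₂ < 1 := by
  have : 0 ≤ p₁ * (r₁ - 1) ^ 2 + p₂ * (r₂ - 1) ^ 2 := by positivity
  linarith

lemma weighted_sum_sq_lt_one (hr₁ : |r₁| < 1) (hr₂ : |r₂| < 1)
    (hp₁ : 0 ≤ p₁) (hp₂ : 0 ≤ p₂) (hp : p₁ + p₂ = 1) : p₁ * r₁ ^ 2 + p₂ * r₂ ^ 2 < 1 :=
  convex_Iio (1 : ℝ) ((sq_lt_one_iff_abs_lt_one r₁).2 hr₁) ((sq_lt_one_iff_abs_lt_one r₂).2 hr₂)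
    hp₁ hp₂ hp

variable {P : Measure ℝ}

lemma isSelfSimilarMeasure_two_maps
    (hP : P = ENNReal.ofReal p₁ • P.map (fun x ↦ r₁ * x) +
      ENNReal.ofReal p₂ • P.map (fun x ↦ r₂ * x + (1 - r₂))) :
    IsSelfSimilarMeasure ![p₁, p₂] (fun i x ↦ ![r₁, r₂] i * x + ![0, 1 - r₂] i) P := by
  simpa [IsSelfSimilarMeasure, Fin.sum_univ_two] using hP

variable [IsProbabilityMeasure P]

lemma mean_mul_two_maps (hp₁ : 0 ≤ p₁) (hp₂ : 0 ≤ p₂)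
    (hP : P = ENNReal.ofReal p₁ • P.map (fun x ↦ r₁ * x) +
      ENNReal.ofReal p₂ • P.map (fun x ↦ r₂ * x + (1 - r₂)))
    (hL1 : Integrable (fun x ↦ x) P) :
    (∫ x, x ∂P) * (1 - (p₁ * r₁ + p₂ * r₂)) = p₂ * (1 - r₂) := by
  have hm := (isSelfSimilarMeasure_two_maps hP).mean_affine
    (by simp [Fin.forall_fin_two, hp₁, hp₂]) hL1
  simp only [Fin.sum_univ_two, Matrix.cons_val_zero, Matrix.cons_val_one] at hm
  linear_combination hm

lemma variance_mul_two_maps (hp₁ : 0 ≤ p₁) (hp₂ : 0 ≤ p₂)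
    (hP : P = ENNReal.ofReal p₁ • P.map (fun x ↦ r₁ * x) +
      ENNReal.ofReal p₂ • P.map (fun x ↦ r₂ * x + (1 - r₂)))
    (hL2 : MemLp (fun x ↦ x) 2 P) :
    Var[fun x ↦ x; P] * (1 - (p₁ * r₁ ^ 2 + p₂ * r₂ ^ 2)) =
      p₁ * ((1 - r₁) * ∫ x, x ∂P) ^ 2 + p₂ * ((1 - r₂) * (1 - ∫ x, x ∂P)) ^ 2 := by
  have hV := (isSelfSimilarMeasure_two_maps hP).variance_affine
    (by simp [Fin.forall_fin_two, hp₁, hp₂]) hL2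
  simp only [Fin.sum_univ_two, Matrix.cons_val_zero, Matrix.cons_val_one] at hV
  linear_combination hV

lemma variance_two_maps (hp₁ : 0 ≤ p₁) (hp₂ : 0 ≤ p₂)
    (hp : p₁ + p₂ = 1) (hr : p₁ * r₁ ^ 2 + p₂ * r₂ ^ 2 < 1)
    (hP : P = ENNReal.ofReal p₁ • P.map (fun x ↦ r₁ * x) +
      ENNReal.ofReal p₂ • P.map (fun x ↦ r₂ * x + (1 - r₂)))
    (hL2 : MemLp (fun x ↦ x) 2 P) :
    Var[fun x ↦ x; P] = p₁ * p₂ * ((1 - r₁) * (1 - r₂)) ^ 2 /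
      ((1 - (p₁ * r₁ + p₂ * r₂)) ^ 2 * (1 - (p₁ * r₁ ^ 2 + p₂ * r₂ ^ 2))) := by
  have hA : 0 < 1 - (p₁ * r₁ + p₂ * r₂) :=
    sub_pos.2 (weighted_sum_lt_one_of_weighted_sum_sq_lt_one hp₁ hp₂ hp hr)
  have hB : 0 < 1 - (p₁ * r₁ ^ 2 + p₂ * r₂ ^ 2) := sub_pos.2 hr
  have mean_mul := mean_mul_two_maps hp₁ hp₂ hP (hL2.integrable one_le_two)
  have one_sub_mean_mul :
      (1 - ∫ x, x ∂P) * (1 - (p₁ * r₁ + p₂ * r₂)) = p₁ * (1 - r₁) := by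
    linear_combination -hp - mean_mul
  have variance_mul := variance_mul_two_maps hp₁ hp₂ hP hL2
  rw [eq_div_iff (mul_pos (pow_pos hA 2) hB).ne']
  set m := ∫ x, x ∂P
  set V := Var[fun x ↦ x; P]
  generalize 1 - (p₁ * r₁ + p₂ * r₂) = A at mean_mul one_sub_mean_mul ⊢
  generalize 1 - (p₁ * r₁ ^ 2 + p₂ * r₂ ^ 2) = B at variance_mul ⊢
  calc V * (A ^ 2 * B)
      = p₁ * (1 - r₁) ^ 2 * (m * A) ^ 2 + p₂ * (1 - r₂) ^ 2 * ((1 - m) * A) ^ 2 := by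
        linear_combination A ^ 2 * variance_mul
    _ = p₁ * p₂ * ((1 - r₁) * (1 - r₂)) ^ 2 * (p₁ + p₂) := by
        rw [mean_mul, one_sub_mean_mul]; ring
    _ = p₁ * p₂ * ((1 - r₁) * (1 - r₂)) ^ 2 := by rw [hp, mul_one]

theorem stmt_4_general (hp₁ : 0 ≤ p₁) (hp₂ : 0 ≤ p₂)
    (hp : p₁ + p₂ = 1) (hr : p₁ * r₁ ^ 2 + p₂ * r₂ ^ 2 < 1)
    (hP : P = ENNReal.ofReal p₁ • P.map (fun x ↦ r₁ * x) +
      ENNReal.ofReal p₂ • P.map (fun x ↦ r₂ * x + (1 - r₂)))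
    (hL2 : MemLp (fun x ↦ x) 2 P) :
    ∫ x, (x - ∫ y, y ∂P) ^ 2 ∂P =
      -(p₂ * (r₂ - 1) ^ 2 * ((p₁ * r₁ - 1) ^ 2 + p₂ * (p₁ * r₁ ^ 2 - 1))) /
        ((p₁ * r₁ + p₂ * r₂ - 1) ^ 2 * (p₁ * r₁ ^ 2 + p₂ * r₂ ^ 2 - 1)) := by
  have numerator_factor : (p₁ * r₁ - 1) ^ 2 + p₂ * (p₁ * r₁ ^ 2 - 1) = p₁ * (1 - r₁) ^ 2 := by
    linear_combination (p₁ * r₁ ^ 2 - 1) * hp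
  rw [← variance_eq_integral aemeasurable_id', variance_two_maps hp₁ hp₂ hp hr hP hL2,
    numerator_factor, ← neg_div_neg_eq]
  congr 1 <;> ring

end TwoMaps

theorem stmt_4 (r₁ r₂ p₁ p₂ : ℝ) (hr₁ : 0 < r₁) (hr₂ : 0 < r₂) (hr : r₁ + r₂ < 1)
    (hp₁ : 0 < p₁) (hp₂ : 0 < p₂) (hp : p₁ + p₂ = 1)
    (S₁ S₂ : ℝ → ℝ)
    (hS₁ : S₁ = fun x => r₁ * x)
    (hS₂ : S₂ = fun x => r₂ * x + (1 - r₂))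
    (P : Measure ℝ) [IsProbabilityMeasure P]
    (hP : P = ENNReal.ofReal p₁ • P.map S₁ + ENNReal.ofReal p₂ • P.map S₂)
    (hsupp : P (Set.Icc (0 : ℝ) 1) = 1) :
    ∫ x, (x - ∫ y, y ∂P) ^ 2 ∂P =
      -(p₂ * (r₂ - 1) ^ 2 * ((p₁ * r₁ - 1) ^ 2 + p₂ * (p₁ * r₁ ^ 2 - 1))) /
        ((p₁ * r₁ + p₂ * r₂ - 1) ^ 2 * (p₁ * r₁ ^ 2 + p₂ * r₂ ^ 2 - 1)) := by
  subst hS₁ hS₂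
  have ae_mem_Icc : ∀ᵐ x ∂P, x ∈ Set.Icc (0 : ℝ) 1 :=
    (prob_compl_eq_zero_iff measurableSet_Icc).2 hsupp
  have mean_square_contraction : p₁ * r₁ ^ 2 + p₂ * r₂ ^ 2 < 1 :=
    weighted_sum_sq_lt_one (abs_lt.2 ⟨by linarith, by linarith⟩)
      (abs_lt.2 ⟨by linarith, by linarith⟩) hp₁.le hp₂.le hp
  exact stmt_4_general hp₁.le hp₂.le hp mean_square_contraction hP
    (memLp_of_bounded ae_mem_Icc aestronglyMeasurable_id 2)
end

section
/- (Note 2.3, conditional expectation on a cylinder) Assume P([0,1]) = 1. Then for every word σ ∈ {1,2}^k with k ≥ 1, the conditional expectation of X given X ∈ J_σ satisfies E(X | X ∈ J_σ) = (1/P(J_σ)) ∫_{J_σ} x dP(x) = S_σ(E(X)). -/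
open MeasureTheory

/-- `S_σ = S_{σ₁} ∘ S_{σ₂} ∘ ⋯ ∘ S_{σ_k}` for a word `σ ∈ {1,2}^k`. -/
def wordMap (S : Fin 2 → ℝ → ℝ) {k : ℕ} (σ : Fin k → Fin 2) : ℝ → ℝ :=
  (List.ofFn fun i => S (σ i)).foldr (· ∘ ·) id

/-!
Self-similarity localizes to cylinders. Since `P` lives on `K` and the first-level images `S_j(K)`
overlap in `P`-null sets, only the branch `i` charges subsets of `S_i(K)`, so
`P|_{S_i(A)} = p_i • (S_i)_* (P|_A)` for every `A ⊆ K`. Iterating along a word `w` gives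
`P|_{S_w(K)} = p_w • (S_w)_* P`: conditioned on the cylinder `S_w(K)`, the variable `X` has the law
of `S_w(X)`. When the maps are affine, `S_w` moreover commutes with the expectation.
-/

open Set
open scoped ENNReal Function ProbabilityTheory

section CylinderMap

variable {ι X : Type*}

/-- The composition `S_{w₁} ∘ ⋯ ∘ S_{w_k}` along a word `w` over an arbitrary alphabet. Words are
lists, so that statements about cylinders can be proved by induction on the word. -/
def cylinderMap (S : ι → X → X) (w : List ι) : X → X :=
  (w.map S).foldr (· ∘ ·) id

lemma wordMap_eq_cylinderMap (S : Fin 2 → ℝ → ℝ) {k : ℕ} (σ : Fin k → Fin 2) :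
    wordMap S σ = cylinderMap S (List.ofFn σ) := by
  simp only [wordMap, cylinderMap, List.map_ofFn, Function.comp_def]

@[simp]
lemma cylinderMap_nil (S : ι → X → X) : cylinderMap S [] = id := rfl

@[simp]
lemma cylinderMap_cons (S : ι → X → X) (i : ι) (w : List ι) :
    cylinderMap S (i :: w) = S i ∘ cylinderMap S w := rfl

lemma mapsTo_cylinderMap {S : ι → X → X} {K : Set X} (hS : ∀ i, MapsTo (S i) K K) (w : List ι) :
    MapsTo (cylinderMap S w) K K := by
  induction w with
  | nil => exact mapsTo_id K
  | cons i w ih => exact (hS i).comp ih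

lemma measurableEmbedding_cylinderMap [MeasurableSpace X] {S : ι → X → X}
    (hS : ∀ i, MeasurableEmbedding (S i)) (w : List ι) :
    MeasurableEmbedding (cylinderMap S w) := by
  induction w with
  | nil => exact .id
  | cons i w ih => exact (hS i).comp ih

lemma exists_continuousAffineMap_eq_cylinderMap {R V : Type*} [Ring R] [AddCommGroup V]
    [Module R V] [TopologicalSpace X] [AddTorsor V X] {S : ι → X → X}
    (hS : ∀ i, ∃ f : X →ᴬ[R] X, ⇑f = S i) (w : List ι) :
    ∃ f : X →ᴬ[R] X, ⇑f = cylinderMap S w := by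
  induction w with
  | nil => exact ⟨.id R X, rfl⟩
  | cons i w ih =>
    obtain ⟨f, hf⟩ := hS i
    obtain ⟨g, hg⟩ := ih
    exact ⟨f.comp g, by rw [ContinuousAffineMap.coe_comp, hf, hg, cylinderMap_cons]⟩

end CylinderMap

/-- `P` is a self-similar measure on `K` for the maps `S i` with weights `p i`: it satisfies
`P = ∑ i, p i • (S i)_* P`, it is carried by the set `K`, which the maps send into itself, and the
first-level images `S i '' K` are essentially disjoint. The index set may be infinite, and the
weights need not sum to `1`. -/
structure IsSelfSimilarOn {ι X : Type*} [MeasurableSpace X] (S : ι → X → X) (p : ι → ℝ≥0∞)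
    (K : Set X) (P : Measure X) : Prop where
  measurableEmbedding (i : ι) : MeasurableEmbedding (S i)
  measurableSet : MeasurableSet K
  mapsTo (i : ι) : MapsTo (S i) K K
  aedisjoint : Pairwise (AEDisjoint P on fun i => S i '' K)
  ae_mem : ∀ᵐ x ∂P, x ∈ K
  eq_sum : P = Measure.sum fun i => p i • P.map (S i)

namespace IsSelfSimilarOn

variable {ι X : Type*} [MeasurableSpace X] {S : ι → X → X} {p : ι → ℝ≥0∞} {K : Set X}
  {P : Measure X}

lemma smul_map_le (h : IsSelfSimilarOn S p K P) (i : ι) : p i • P.map (S i) ≤ P := by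
  conv_rhs => rw [h.eq_sum]
  exact Measure.le_sum _ i

lemma smul_map_image_eq_zero_of_ne (h : IsSelfSimilarOn S p K P) {i j : ι} (hij : i ≠ j) :
    (p j • P.map (S j)) (S i '' K) = 0 := by
  have overlap_null : (p j • P.map (S j)) (S i '' K ∩ S j '' K) = 0 :=
    (h.smul_map_le j).absolutelyContinuous (h.aedisjoint hij)
  have compl_null : (p j • P.map (S j)) (S j '' K)ᶜ = 0 := by
    rw [Measure.smul_apply, (h.measurableEmbedding j).map_apply, preimage_compl,
      (h.measurableEmbedding j).injective.preimage_image, (mem_ae_iff (s := K)).mp h.ae_mem,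
      smul_zero]
  refine measure_mono_null (fun x hx => ?_) (measure_union_null overlap_null compl_null)
  exact (em (x ∈ S j '' K)).imp (And.intro hx) id

lemma measure_eq_mul_of_subset_image (h : IsSelfSimilarOn S p K P) {i : ι} {B : Set X}
    (hB : MeasurableSet B) (hBK : B ⊆ S i '' K) : P B = p i * P (S i ⁻¹' B) := by
  calc P B = ∑' j, (p j • P.map (S j)) B := by
        conv_lhs => rw [h.eq_sum, Measure.sum_apply _ hB]
    _ = (p i • P.map (S i)) B :=
        tsum_eq_single i fun j hj =>
          measure_mono_null hBK (h.smul_map_image_eq_zero_of_ne hj.symm)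
    _ = p i * P (S i ⁻¹' B) := by
        rw [Measure.smul_apply, (h.measurableEmbedding i).map_apply, smul_eq_mul]

lemma restrict_image (h : IsSelfSimilarOn S p K P) (i : ι) {A : Set X} (hA : MeasurableSet A)
    (hAK : A ⊆ K) : P.restrict (S i '' A) = p i • (P.restrict A).map (S i) := by
  have hS := h.measurableEmbedding i
  ext B hB
  rw [Measure.restrict_apply hB, Measure.smul_apply, hS.map_apply,
    Measure.restrict_apply (hS.measurable hB), smul_eq_mul,
    h.measure_eq_mul_of_subset_image (hB.inter (hS.measurableSet_image' hA))
      (inter_subset_right.trans (image_mono hAK)),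
    preimage_inter, hS.injective.preimage_image]

theorem restrict_cylinder (h : IsSelfSimilarOn S p K P) (w : List ι) :
    P.restrict (cylinderMap S w '' K) = (w.map p).prod • P.map (cylinderMap S w) := by
  induction w with
  | nil => simp [Measure.restrict_eq_self_of_ae_mem h.ae_mem]
  | cons i w ih =>
    have hw := measurableEmbedding_cylinderMap h.measurableEmbedding w
    calc P.restrict (cylinderMap S (i :: w) '' K)
        = P.restrict (S i '' (cylinderMap S w '' K)) := by rw [cylinderMap_cons, image_comp]
      _ = p i • (P.restrict (cylinderMap S w '' K)).map (S i) :=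
          h.restrict_image i (hw.measurableSet_image' h.measurableSet)
            (mapsTo_cylinderMap h.mapsTo w).image_subset
      _ = ((i :: w).map p).prod • P.map (cylinderMap S (i :: w)) := by
          rw [ih, Measure.map_smul,
            Measure.map_map (h.measurableEmbedding i).measurable hw.measurable, smul_smul,
            List.map_cons, List.prod_cons, cylinderMap_cons]

variable [IsProbabilityMeasure P]

lemma measure_cylinder (h : IsSelfSimilarOn S p K P) (w : List ι) :
    P (cylinderMap S w '' K) = (w.map p).prod := by
  rw [← Measure.restrict_apply_univ, h.restrict_cylinder, Measure.smul_apply,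
    (measurableEmbedding_cylinderMap h.measurableEmbedding w).map_apply, preimage_univ,
    measure_univ, smul_eq_mul, mul_one]

theorem cond_cylinder (h : IsSelfSimilarOn S p K P) {w : List ι} (hp : ∀ i ∈ w, p i ≠ 0) :
    P[|cylinderMap S w '' K] = P.map (cylinderMap S w) := by
  have cylinder_ne_zero : P (cylinderMap S w '' K) ≠ 0 := by
    rw [h.measure_cylinder, Ne, List.prod_eq_zero_iff, List.mem_map]
    exact fun ⟨i, hiw, hi⟩ => hp i hiw hi
  rw [ProbabilityTheory.cond, h.restrict_cylinder, ← h.measure_cylinder, smul_smul,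
    ENNReal.inv_mul_cancel cylinder_ne_zero (measure_ne_top P _), one_smul]

end IsSelfSimilarOn

lemma integral_continuousAffineMap_comp {Ω E F : Type*} [MeasurableSpace Ω]
    [NormedAddCommGroup E] [NormedSpace ℝ E] [CompleteSpace E]
    [NormedAddCommGroup F] [NormedSpace ℝ F] [CompleteSpace F]
    {P : Measure Ω} [IsProbabilityMeasure P] (f : E →ᴬ[ℝ] F) {X : Ω → E} (hX : Integrable X P) :
    ∫ ω, f (X ω) ∂P = f (∫ ω, X ω ∂P) := by
  have f_apply (x : E) : f x = f.contLinear x + f 0 := congr_fun f.decomp x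
  calc ∫ ω, f (X ω) ∂P = ∫ ω, (f.contLinear (X ω) + f 0) ∂P := by simp only [← f_apply]
    _ = f.contLinear (∫ ω, X ω ∂P) + f 0 := by
        rw [integral_add (f.contLinear.integrable_comp hX) (integrable_const _),
          f.contLinear.integral_comp_comm hX, integral_const, probReal_univ, one_smul]
    _ = f (∫ ω, X ω ∂P) := (f_apply _).symm

theorem stmt_11_general {ι E : Type*} [NormedAddCommGroup E] [NormedSpace ℝ E] [CompleteSpace E]
    [MeasurableSpace E] {S : ι → E → E} {p : ι → ℝ≥0∞} {K : Set E} {P : Measure E}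
    [IsProbabilityMeasure P] (h : IsSelfSimilarOn S p K P)
    (hS : ∀ i, ∃ f : E →ᴬ[ℝ] E, ⇑f = S i) (hint : Integrable id P) {w : List ι}
    (hp : ∀ i ∈ w, p i ≠ 0) :
    ⨍ x in cylinderMap S w '' K, x ∂P = cylinderMap S w (∫ x, x ∂P) := by
  obtain ⟨f, hf⟩ := exists_continuousAffineMap_eq_cylinderMap hS w
  calc ⨍ x in cylinderMap S w '' K, x ∂P = ∫ x, x ∂P[|cylinderMap S w '' K] := setAverage_eq' ..
    _ = ∫ x, x ∂P.map (cylinderMap S w) := by rw [h.cond_cylinder hp]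
    _ = ∫ x, cylinderMap S w x ∂P :=
        (measurableEmbedding_cylinderMap h.measurableEmbedding w).integral_map _
    _ = cylinderMap S w (∫ x, x ∂P) := by
        rw [← hf]
        exact integral_continuousAffineMap_comp f hint

lemma exists_continuousAffineMap_eq_mul_add (a b : ℝ) :
    ∃ f : ℝ →ᴬ[ℝ] ℝ, ⇑f = fun x => a * x + b :=
  ⟨a • .id ℝ ℝ + .const ℝ ℝ b, rfl⟩

lemma isSelfSimilarOn_Icc {ι : Type*} {S : ι → ℝ → ℝ} {r b : ι → ℝ} {p : ι → ℝ≥0∞} {P : Measure ℝ}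
    (hS : ∀ i x, S i x = r i * x + b i) (hr : ∀ i, 0 < r i)
    (hsub : ∀ i, Icc (b i) (r i + b i) ⊆ Icc 0 1)
    (hdisj : Pairwise (AEDisjoint P on fun i => Icc (b i) (r i + b i)))
    (hsupp : ∀ᵐ x ∂P, x ∈ Icc (0 : ℝ) 1) (hP : P = Measure.sum fun i => p i • P.map (S i)) :
    IsSelfSimilarOn S p (Icc 0 1) P := by
  have image_eq (i : ι) : S i '' Icc 0 1 = Icc (b i) (r i + b i) := by
    rw [funext (hS i), image_affine_Icc' (hr i), mul_zero, zero_add, mul_one]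
  have embedding (i : ι) : MeasurableEmbedding (S i) := by
    rw [funext (hS i)]
    exact (measurableEmbedding_addRight (b i)).comp (measurableEmbedding_mulLeft₀ (hr i).ne')
  exact
    { measurableEmbedding := embedding
      measurableSet := measurableSet_Icc
      mapsTo := fun i => mapsTo_iff_image_subset.mpr (image_eq i ▸ hsub i)
      aedisjoint := by simpa only [image_eq] using hdisj
      ae_mem := hsupp
      eq_sum := hP }

lemma isSelfSimilarOn_Icc_of_two_maps {r₁ r₂ : ℝ} {p₁ p₂ : ℝ≥0∞} {S : Fin 2 → ℝ → ℝ} {P : Measure ℝ}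
    (hr₁ : 0 < r₁) (hr₂ : 0 < r₂) (hr : r₁ + r₂ < 1) (hS₁ : S 0 = fun x => r₁ * x)
    (hS₂ : S 1 = fun x => r₂ * x + (1 - r₂)) (hP : P = p₁ • P.map (S 0) + p₂ • P.map (S 1))
    (hsupp : ∀ᵐ x ∂P, x ∈ Icc (0 : ℝ) 1) :
    IsSelfSimilarOn S ![p₁, p₂] (Icc 0 1) P := by
  have disjoint : Disjoint (Icc 0 r₁) (Icc (1 - r₂) 1) :=
    disjoint_left.mpr fun x hx hx' => by linarith [hx.2, hx'.1]
  refine isSelfSimilarOn_Icc (r := ![r₁, r₂]) (b := ![0, 1 - r₂]) ?_ ?_ ?_ ?_ hsupp ?_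
  · simp [Fin.forall_fin_two, hS₁, hS₂]
  · simp [Fin.forall_fin_two, hr₁, hr₂]
  · simp only [Fin.forall_fin_two, Matrix.cons_val_zero, Matrix.cons_val_one, add_zero,
      add_sub_cancel]
    exact ⟨Icc_subset_Icc_right (by linarith), Icc_subset_Icc_left (by linarith)⟩
  · rw [pairwise_fin_succ_iff_of_isSymm]
    simpa [Function.onFun] using disjoint.aedisjoint
  · simpa [Measure.sum_fintype] using hP

theorem stmt_11 (r₁ r₂ p₁ p₂ : ℝ) (hr₁ : 0 < r₁) (hr₂ : 0 < r₂) (hr : r₁ + r₂ < 1)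
    (hp₁ : 0 < p₁) (hp₂ : 0 < p₂) (hp : p₁ + p₂ = 1)
    (S : Fin 2 → ℝ → ℝ)
    (hS₁ : S 0 = fun x => r₁ * x)
    (hS₂ : S 1 = fun x => r₂ * x + (1 - r₂))
    (P : Measure ℝ) [IsProbabilityMeasure P]
    (hP : P = ENNReal.ofReal p₁ • P.map (S 0) + ENNReal.ofReal p₂ • P.map (S 1))
    (hsupp : P (Set.Icc (0 : ℝ) 1) = 1)
    (k : ℕ) (hk : 1 ≤ k) (σ : Fin k → Fin 2) :
    (P (wordMap S σ '' Set.Icc (0 : ℝ) 1)).toReal⁻¹ *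
        ∫ x in wordMap S σ '' Set.Icc (0 : ℝ) 1, x ∂P =
      wordMap S σ (∫ x, x ∂P) := by
  have ae_mem : ∀ᵐ x ∂P, x ∈ Icc (0 : ℝ) 1 := (mem_ae_iff_prob_eq_one measurableSet_Icc).mpr hsupp
  have selfSimilar := isSelfSimilarOn_Icc_of_two_maps hr₁ hr₂ hr hS₁ hS₂ hP ae_mem
  have weights_ne_zero : ∀ i, ![ENNReal.ofReal p₁, ENNReal.ofReal p₂] i ≠ 0 := by
    simp [Fin.forall_fin_two, hp₁, hp₂]
  have affine : ∀ i, ∃ f : ℝ →ᴬ[ℝ] ℝ, ⇑f = S i := by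
    rw [Fin.forall_fin_two, hS₁, hS₂]
    exact ⟨by simpa using exists_continuousAffineMap_eq_mul_add r₁ 0,
      exists_continuousAffineMap_eq_mul_add r₂ (1 - r₂)⟩
  have integrable_id : Integrable id P := .of_mem_Icc 0 1 aemeasurable_id ae_mem
  rw [wordMap_eq_cylinderMap, ← measureReal_def, ← smul_eq_mul, ← setAverage_eq]
  exact stmt_11_general selfSimilar affine integrable_id fun i _ => weights_ne_zero i
end

section
/- (Example 4.1, four means) Let P be the classical Cantor distribution: r₁ = r₂ = 1/3, p₁ = p₂ = 1/2, P = (1/2)·(P∘S₁⁻¹) + (1/2)·(P∘S₂⁻¹), and assume P([0,1]) = 1. Then the set α = {1/18, 5/18, 13/18, 17/18} together with the cells J₁₁ = [0, 1/9], J₁₂ = [2/9, 1/3], J₂₁ = [2/3, 7/9], J₂₂ = [8/9, 1] forms a centroidal Voronoi tessellation with four means: (i) P(J₁₁ ∪ J₁₂ ∪ J₂₁ ∪ J₂₂) = 1; (ii) the centroid of J₁₁ is 1/18, the centroid of J₁₂ is 5/18, the centroid of J₂₁ is 13/18, and the centroid of J₂₂ is 17/18, where the centroid of a cell A is (1/P(A))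 ∫_A x dP(x); and (iii) every point of each cell attains its minimum distance to α at the corresponding generator, i.e., each cell is contained in the Voronoi region of its generator. -/
open MeasureTheory

/-!
Let `P` be a self-similar measure carried by a set whose images under the branches `S i` are
disjoint, and let `B` be a subset of positive measure of that set. Conditioned on `S i '' B`, the
measure `P` is the image under `S i` of `P` conditioned on `B`: the other branches put no mass
there. An affine branch therefore maps the centroid of `B` to the centroid of `S i '' B`. Applied
twice to `[0, 1]`, whose centroid is the mean `1 / 2` of the Cantor distribution (the solution of
`m = m / 6 + (m / 3 + 2 / 3) / 2`), this computes the four centroids. The four means are at mutual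
distance at least twice the radius `1 / 18` of the cells, which gives the Voronoi property.
-/

open ProbabilityTheory Set
open scoped NNReal

/-- A self-similar measure for the iterated function system `S` with weights `p`, as in Hutchinson's
theorem. The weights are not required to sum to `1`; this is automatic when `P` is a probability
measure and the branches are measurable. -/
def IsSelfSimilar {α ι : Type*} [MeasurableSpace α] [Fintype ι] (p : ι → ℝ≥0) (S : ι → α → α)
    (P : Measure α) : Prop :=
  P = ∑ i, p i • P.map (S i)

/-- A set `K` carrying `P` whose images under the branches of the iterated function system `S` are
pairwise disjoint: the strong separation condition relative to the measure `P`. -/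
structure IsSeparatedCarrier {α ι : Type*} [MeasurableSpace α] (S : ι → α → α) (P : Measure α)
    (K : Set α) : Prop where
  ae_mem : ∀ᵐ x ∂P, x ∈ K
  pairwise_disjoint : Pairwise fun i j ↦ Disjoint (S i '' K) (S j '' K)

namespace IsSelfSimilar

section Measure

variable {α ι : Type*} [MeasurableSpace α] [Fintype ι] {p : ι → ℝ≥0} {S : ι → α → α}
  {P : Measure α} {K B : Set α}

theorem ae_mem_iUnion_image (h : IsSelfSimilar p S P) (hS : ∀ i, MeasurableEmbedding (S i))
    (hK : ∀ᵐ x ∂P, x ∈ K) : ∀ᵐ x ∂P, x ∈ ⋃ i, S i '' K := by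
  rw [h, ae_finsetSum_measure_iff]
  refine fun i _ ↦ Measure.ae_smul_measure ((hS i).ae_map_iff.2 ?_) _
  filter_upwards [hK] with x hx using mem_iUnion_of_mem i (mem_image_of_mem _ hx)

theorem restrict_image (h : IsSelfSimilar p S P) (hS : ∀ i, MeasurableEmbedding (S i))
    (hK : IsSeparatedCarrier S P K) (hB : B ⊆ K) (i : ι) :
    P.restrict (S i '' B) = p i • (P.restrict B).map (S i) := by
  have hnull (j : ι) (hj : j ≠ i) : P.restrict (S j ⁻¹' (S i '' B)) = 0 := by
    refine Measure.restrict_zero_set <|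
      measure_mono_null (t := {x | x ∉ K}) (fun x hx hxK ↦ ?_) hK.ae_mem
    exact (hK.pairwise_disjoint hj).notMem_of_mem_left (mem_image_of_mem _ hxK) (image_mono hB hx)
  calc P.restrict (S i '' B)
      = ∑ j, p j • (P.restrict (S j ⁻¹' (S i '' B))).map (S j) := by
        conv_lhs => rw [h]
        simp only [← Measure.sum_fintype, Measure.restrict_sum_of_countable,
          Measure.restrict_smul, (hS _).restrict_map]
    _ = p i • (P.restrict B).map (S i) := by
        rw [Finset.sum_eq_single_of_mem i (Finset.mem_univ i) fun j _ hj ↦ by simp [hnull j hj],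
          preimage_image_eq B (hS i).injective]

theorem measure_image (h : IsSelfSimilar p S P) (hS : ∀ i, MeasurableEmbedding (S i))
    (hK : IsSeparatedCarrier S P K) (hB : B ⊆ K) (i : ι) : P (S i '' B) = p i * P B := by
  rw [← Measure.restrict_apply_univ, h.restrict_image hS hK hB, Measure.smul_apply,
    (hS i).map_apply, preimage_univ, Measure.restrict_apply_univ, ENNReal.smul_def, smul_eq_mul]

theorem cond_image (h : IsSelfSimilar p S P) (hS : ∀ i, MeasurableEmbedding (S i))
    (hK : IsSeparatedCarrier S P K) (hB : B ⊆ K) {i : ι} (hp : p i ≠ 0) :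
    P[|S i '' B] = (P[|B]).map (S i) := by
  have hp' : (p i : ENNReal) ≠ 0 := by exact_mod_cast hp
  rw [ProbabilityTheory.cond, ProbabilityTheory.cond, h.measure_image hS hK hB,
    h.restrict_image hS hK hB, Measure.map_smul,
    ENNReal.mul_inv (.inl hp') (.inl ENNReal.coe_ne_top), ← Measure.coe_nnreal_smul, smul_smul,
    mul_right_comm, ENNReal.inv_mul_cancel hp' ENNReal.coe_ne_top, one_mul]

end Measure

end IsSelfSimilar

section Affine

variable {Ω E F : Type*} [MeasurableSpace Ω] {μ : Measure Ω} [NormedAddCommGroup E]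
  [NormedSpace ℝ E] [NormedAddCommGroup F] [NormedSpace ℝ F] {X : Ω → E}

theorem integrable_continuousAffineMap_comp [IsFiniteMeasure μ] (f : E →ᴬ[ℝ] F)
    (hX : Integrable X μ) : Integrable (fun ω ↦ f (X ω)) μ := by
  rw [f.decomp]
  exact (f.contLinear.integrable_comp hX).add (integrable_const _)

theorem integral_continuousAffineMap_comp_comm [CompleteSpace E] [CompleteSpace F]
    [IsProbabilityMeasure μ] (f : E →ᴬ[ℝ] F) (hX : Integrable X μ) :
    ∫ ω, f (X ω) ∂μ = f (∫ ω, X ω ∂μ) := by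
  rw [f.decomp]
  simp only [Pi.add_apply, Function.const_apply]
  rw [integral_add (f.contLinear.integrable_comp hX) (integrable_const _),
    f.contLinear.integral_comp_comm hX, integral_const, probReal_univ, one_smul]

end Affine

namespace IsSelfSimilar

variable {E ι : Type*} [NormedAddCommGroup E] [NormedSpace ℝ E] [CompleteSpace E]
  [MeasurableSpace E] [Fintype ι] {p : ι → ℝ≥0} {S : ι → E →ᴬ[ℝ] E} {P : Measure E}

theorem integral_id_eq_sum [IsProbabilityMeasure P] (h : IsSelfSimilar p (fun i ↦ S i) P)
    (hS : ∀ i, MeasurableEmbedding (S i)) (hint : Integrable id P) :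
    ∫ x, x ∂P = ∑ i, p i • S i (∫ x, x ∂P) := by
  have hmap (i : ι) : Integrable id (p i • P.map (S i)) := by
    refine Integrable.smul_measure_nnreal ((hS i).integrable_map_iff.2 ?_)
    exact integrable_continuousAffineMap_comp (S i) hint
  calc ∫ x, x ∂P = ∫ x, x ∂∑ i, p i • P.map (S i) := congrArg (fun μ ↦ ∫ x, x ∂μ) h
    _ = ∑ i, p i • S i (∫ x, x ∂P) := by
      rw [integral_finsetSum_measure (f := fun x ↦ x) fun i _ ↦ hmap i]
      refine Finset.sum_congr rfl fun i _ ↦ ?_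
      rw [integral_smul_nnreal_measure, (hS i).integral_map]
      congr 1
      exact integral_continuousAffineMap_comp_comm (S i) hint

theorem setAverage_image [IsFiniteMeasure P] (h : IsSelfSimilar p (fun i ↦ S i) P)
    (hS : ∀ i, MeasurableEmbedding (S i)) {K B : Set E}
    (hK : IsSeparatedCarrier (fun i ↦ S i) P K) (hB : B ⊆ K) (hPB : P B ≠ 0)
    (hint : IntegrableOn id B P) {i : ι} (hp : p i ≠ 0) :
    ⨍ x in S i '' B, x ∂P = S i (⨍ x in B, x ∂P) := by
  have := cond_isProbabilityMeasure hPB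
  have hcond : Integrable id P[|B] := hint.smul_measure (ENNReal.inv_ne_top.2 hPB)
  calc ⨍ x in S i '' B, x ∂P = ∫ x, x ∂P[|S i '' B] := setAverage_eq' _ _ _
    _ = ∫ x, S i x ∂P[|B] := by
      rw [h.cond_image hS hK hB hp, (hS i).integral_map]
    _ = S i (∫ x, x ∂P[|B]) := integral_continuousAffineMap_comp_comm (S i) hcond
    _ = S i (⨍ x in B, x ∂P) := by rw [setAverage_eq', ProbabilityTheory.cond]

end IsSelfSimilar

theorem isLeast_dist_image_of_pairwise_le_dist {α : Type*} [PseudoMetricSpace α] {s : Set α}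
    {r : ℝ} (hs : s.Pairwise fun a b ↦ 2 * r ≤ dist a b) {g x : α} (hg : g ∈ s)
    (hx : dist x g ≤ r) : IsLeast ((fun b ↦ dist x b) '' s) (dist x g) := by
  refine ⟨mem_image_of_mem _ hg, forall_mem_image.2 fun b hb ↦ ?_⟩
  obtain rfl | hne := eq_or_ne g b
  · rfl
  · linarith [hs hg hb hne, dist_triangle_left g b x]

/-- The branches `S₁ x = x / 3` and `S₂ x = x / 3 + 2 / 3` of the Cantor iterated function system,
indexed by their fixed points `0` and `1`. -/
noncomputable def cantorMap (i : Fin 2) : ℝ →ᴬ[ℝ] ℝ :=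
  ⟨AffineMap.homothety (i : ℝ) (3⁻¹ : ℝ), AffineMap.homothety_continuous _ _⟩

theorem cantorMap_apply (i : Fin 2) (x : ℝ) : cantorMap i x = x / 3 + 2 * i / 3 := by
  change 3⁻¹ * (x - i) + i = _
  ring

theorem measurableEmbedding_cantorMap (i : Fin 2) : MeasurableEmbedding (cantorMap i) :=
  (cantorMap i).cont.measurableEmbedding fun x y h ↦ by simpa [cantorMap_apply] using h

theorem cantorMap_image_Icc (i : Fin 2) (a b : ℝ) :
    cantorMap i '' Icc a b = Icc (cantorMap i a) (cantorMap i b) := by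
  simp only [funext (cantorMap_apply i), div_eq_inv_mul]
  exact image_affine_Icc' (by norm_num) _ _ _

theorem disjoint_cantorMap_image_unitInterval :
    Pairwise fun i j ↦ Disjoint (cantorMap i '' Icc 0 1) (cantorMap j '' Icc 0 1) := by
  intro i j hij
  rw [cantorMap_image_Icc, cantorMap_image_Icc]
  simp only [cantorMap_apply, disjoint_left, mem_Icc]
  fin_cases i <;> fin_cases j <;> grind

theorem cantorMap_image_unitInterval_subset (i : Fin 2) : cantorMap i '' Icc 0 1 ⊆ Icc 0 1 := by
  rw [cantorMap_image_Icc, cantorMap_apply, cantorMap_apply]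
  fin_cases i <;> exact Icc_subset_Icc (by norm_num) (by norm_num)

theorem iUnion_cantorMap_image_iUnion_cantorMap_image_unitInterval :
    ⋃ i, cantorMap i '' ⋃ j, cantorMap j '' Icc 0 1 =
      Icc (0 : ℝ) (1 / 9) ∪ Icc (2 / 9) (1 / 3) ∪ Icc (2 / 3) (7 / 9) ∪ Icc (8 / 9) 1 := by
  simp_rw [image_iUnion, cantorMap_image_Icc, cantorMap_apply]
  ext x
  simp only [mem_iUnion, Fin.exists_fin_two, mem_union, or_assoc]
  norm_num

/-- The Cantor distribution: the self-similar measure giving both branches the weight `1 / 2`. -/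
def IsCantorMeasure (P : Measure ℝ) : Prop :=
  IsSelfSimilar (fun _ ↦ 2⁻¹) (fun i ↦ cantorMap i) P

theorem isCantorMeasure_iff {P : Measure ℝ} :
    IsCantorMeasure P ↔ P = (2⁻¹ : ENNReal) • P.map (fun x ↦ x / 3) +
      (2⁻¹ : ENNReal) • P.map (fun x ↦ x / 3 + 2 / 3) := by
  have h0 : ⇑(cantorMap 0) = fun x ↦ x / 3 := by ext x; simp [cantorMap_apply]
  have h1 : ⇑(cantorMap 1) = fun x ↦ x / 3 + 2 / 3 := by ext x; simp [cantorMap_apply]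
  rw [IsCantorMeasure, IsSelfSimilar, Fin.sum_univ_two, h0, h1, ← ENNReal.coe_inv_two,
    Measure.coe_nnreal_smul, Measure.coe_nnreal_smul]

namespace IsCantorMeasure

variable {P : Measure ℝ} [IsProbabilityMeasure P]

theorem integral_id (h : IsCantorMeasure P) (hP : ∀ᵐ x ∂P, x ∈ Icc 0 1) : ∫ x, x ∂P = 1 / 2 := by
  have hint : Integrable id P := .of_mem_Icc 0 1 aemeasurable_id hP
  have hmean : ∫ x, x ∂P = 2⁻¹ * ((∫ x, x ∂P) / 3) + 2⁻¹ * ((∫ x, x ∂P) / 3 + 2 / 3) := by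
    simpa [Fin.sum_univ_two, cantorMap_apply, NNReal.smul_def, mul_add] using
      h.integral_id_eq_sum measurableEmbedding_cantorMap hint
  linarith

theorem setAverage_cantorMap_image (h : IsCantorMeasure P) (hP : ∀ᵐ x ∂P, x ∈ Icc 0 1)
    {B : Set ℝ} (hB : B ⊆ Icc 0 1) (hPB : P B ≠ 0) (i : Fin 2) :
    ⨍ x in cantorMap i '' B, x ∂P = cantorMap i (⨍ x in B, x ∂P) :=
  h.setAverage_image measurableEmbedding_cantorMap
    ⟨hP, disjoint_cantorMap_image_unitInterval⟩ hB hPB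
    (Integrable.of_mem_Icc 0 1 aemeasurable_id hP).integrableOn (by simp)

theorem setAverage_cantorMap_image_cantorMap_image (h : IsCantorMeasure P)
    (hP : ∀ᵐ x ∂P, x ∈ Icc 0 1) (i j : Fin 2) :
    ⨍ x in cantorMap i '' (cantorMap j '' Icc 0 1), x ∂P = cantorMap i (cantorMap j (1 / 2)) := by
  have hunit : P (Icc 0 1) ≠ 0 := by
    rw [(mem_ae_iff_prob_eq_one measurableSet_Icc).1 hP]
    exact one_ne_zero
  have hcell : P (cantorMap j '' Icc 0 1) ≠ 0 := by
    rw [h.measure_image measurableEmbedding_cantorMap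
      ⟨hP, disjoint_cantorMap_image_unitInterval⟩ subset_rfl]
    simpa using hunit
  rw [h.setAverage_cantorMap_image hP (cantorMap_image_unitInterval_subset j) hcell,
    h.setAverage_cantorMap_image hP subset_rfl hunit, Measure.restrict_eq_self_of_ae_mem hP,
    average_eq_integral, h.integral_id hP]

theorem inv_mul_setIntegral_Icc (h : IsCantorMeasure P) (hP : ∀ᵐ x ∂P, x ∈ Icc 0 1) (i j : Fin 2)
    {a b : ℝ} (ha : cantorMap i (cantorMap j 0) = a) (hb : cantorMap i (cantorMap j 1) = b) :
    (P (Icc a b)).toReal⁻¹ * ∫ x in Icc a b, x ∂P = cantorMap i (cantorMap j (1 / 2)) := by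
  rw [← h.setAverage_cantorMap_image_cantorMap_image hP, cantorMap_image_Icc, cantorMap_image_Icc,
    ha, hb, setAverage_eq, smul_eq_mul, measureReal_def]

end IsCantorMeasure

theorem pairwise_le_dist_cantorMeans :
    ({1 / 18, 5 / 18, 13 / 18, 17 / 18} : Set ℝ).Pairwise fun a b ↦ 2 * (1 / 18) ≤ dist a b := by
  rintro a (rfl | rfl | rfl | rfl) b (rfl | rfl | rfl | rfl) hab <;>
    first | exact absurd rfl hab | norm_num [Real.dist_eq, abs_of_pos, abs_of_neg]

theorem isLeast_abs_sub_cantorMeans {g x : ℝ}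
    (hg : g ∈ ({1 / 18, 5 / 18, 13 / 18, 17 / 18} : Set ℝ))
    (hx : x ∈ Icc (g - 1 / 18) (g + 1 / 18)) :
    IsLeast ((fun b ↦ |x - b|) '' {1 / 18, 5 / 18, 13 / 18, 17 / 18}) |x - g| := by
  rw [← Real.closedBall_eq_Icc] at hx
  exact isLeast_dist_image_of_pairwise_le_dist pairwise_le_dist_cantorMeans hg hx

theorem stmt_18 (P : Measure ℝ) [IsProbabilityMeasure P]
    (hP : P = (2⁻¹ : ENNReal) • P.map (fun x : ℝ => x / 3) +
              (2⁻¹ : ENNReal) • P.map (fun x : ℝ => x / 3 + 2 / 3))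
    (hsupp : P (Set.Icc (0 : ℝ) 1) = 1) :
    P (Set.Icc (0 : ℝ) (1 / 9) ∪ Set.Icc (2 / 9) (1 / 3) ∪
        Set.Icc (2 / 3) (7 / 9) ∪ Set.Icc (8 / 9) 1) = 1 ∧
    (P (Set.Icc (0 : ℝ) (1 / 9))).toReal⁻¹ *
        (∫ x in Set.Icc (0 : ℝ) (1 / 9), x ∂P) = 1 / 18 ∧
    (P (Set.Icc (2 / 9 : ℝ) (1 / 3))).toReal⁻¹ *
        (∫ x in Set.Icc (2 / 9 : ℝ) (1 / 3), x ∂P) = 5 / 18 ∧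
    (P (Set.Icc (2 / 3 : ℝ) (7 / 9))).toReal⁻¹ *
        (∫ x in Set.Icc (2 / 3 : ℝ) (7 / 9), x ∂P) = 13 / 18 ∧
    (P (Set.Icc (8 / 9 : ℝ) 1)).toReal⁻¹ *
        (∫ x in Set.Icc (8 / 9 : ℝ) 1, x ∂P) = 17 / 18 ∧
    (∀ x ∈ Set.Icc (0 : ℝ) (1 / 9),
      IsLeast ((fun b => |x - b|) ''
        ({1 / 18, 5 / 18, 13 / 18, 17 / 18} : Set ℝ)) |x - 1 / 18|) ∧
    (∀ x ∈ Set.Icc (2 / 9 : ℝ) (1 / 3),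
      IsLeast ((fun b => |x - b|) ''
        ({1 / 18, 5 / 18, 13 / 18, 17 / 18} : Set ℝ)) |x - 5 / 18|) ∧
    (∀ x ∈ Set.Icc (2 / 3 : ℝ) (7 / 9),
      IsLeast ((fun b => |x - b|) ''
        ({1 / 18, 5 / 18, 13 / 18, 17 / 18} : Set ℝ)) |x - 13 / 18|) ∧
    (∀ x ∈ Set.Icc (8 / 9 : ℝ) 1,
      IsLeast ((fun b => |x - b|) ''
        ({1 / 18, 5 / 18, 13 / 18, 17 / 18} : Set ℝ)) |x - 17 / 18|) := by
  have hC := isCantorMeasure_iff.2 hP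
  have hunit : ∀ᵐ x ∂P, x ∈ Icc 0 1 := (mem_ae_iff_prob_eq_one measurableSet_Icc).2 hsupp
  refine ⟨?_, ?_, ?_, ?_, ?_, ?_, ?_, ?_, ?_⟩
  · refine (mem_ae_iff_prob_eq_one (((measurableSet_Icc.union measurableSet_Icc).union
      measurableSet_Icc).union measurableSet_Icc)).1 ?_
    rw [← iUnion_cantorMap_image_iUnion_cantorMap_image_unitInterval]
    exact hC.ae_mem_iUnion_image measurableEmbedding_cantorMap
      (hC.ae_mem_iUnion_image measurableEmbedding_cantorMap hunit)
  · rw [hC.inv_mul_setIntegral_Icc hunit 0 0] <;> norm_num [cantorMap_apply]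
  · rw [hC.inv_mul_setIntegral_Icc hunit 0 1] <;> norm_num [cantorMap_apply]
  · rw [hC.inv_mul_setIntegral_Icc hunit 1 0] <;> norm_num [cantorMap_apply]
  · rw [hC.inv_mul_setIntegral_Icc hunit 1 1] <;> norm_num [cantorMap_apply]
  all_goals
    intro x hx
    exact isLeast_abs_sub_cantorMeans (by simp) (by convert hx using 2 <;> norm_num)
end
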